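/- Let f: ℝ^{n×n} → ℝ be smooth and let {Q_k} be a Jacobi-G sequence for f on O(n). Then every accumulation point Q* of {Q_k} is a stationary point of f restricted to O(n), i.e. ProjGrad f(Q*) = 0. -/

import Mathlib

open Matrix BigOperators Filter

/-- Frobenius norm of a real matrix. -/
noncomputable def frobR {n : ℕ} (A : Matrix (Fin n) (Fin n) ℝ) : ℝ :=
  Real.sqrt (∑ i, ∑ j, (A i j) ^ 2)

/-- `g` is the Euclidean gradient of `f : ℝ^{n×n} → ℝ`. -/
def IsGradR {n : ℕ} (f : Matrix (Fin n) (Fin n) ℝ → ℝ)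
    (g : Matrix (Fin n) (Fin n) ℝ → Matrix (Fin n) (Fin n) ℝ) : Prop :=
  ∀ Q H, HasDerivAt (fun t : ℝ => f (Q + t • H)) (∑ i, ∑ j, g Q i j * H i j) 0

/-- Riemannian (projected) gradient on O(n): `Q (Λ - Λᵀ)/2` with `Λ = Qᵀ ∇f(Q)`. -/
noncomputable def projGradR {n : ℕ}
    (g : Matrix (Fin n) (Fin n) ℝ → Matrix (Fin n) (Fin n) ℝ)
    (Q : Matrix (Fin n) (Fin n) ℝ) : Matrix (Fin n) (Fin n) ℝ :=
  Q * ((1 / 2 : ℝ) • (Qᵀ * g Q - (Qᵀ * g Q)ᵀ))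

/-- Givens rotation `G(i,j,θ)`: identity except `G_{ii} = G_{jj} = cos θ`,
`G_{ij} = −sin θ`, `G_{ji} = sin θ`. -/
noncomputable def givensR (n : ℕ) (i j : Fin n) (θ : ℝ) : Matrix (Fin n) (Fin n) ℝ :=
  fun a b =>
    if a = i ∧ b = i then Real.cos θ
    else if a = j ∧ b = j then Real.cos θ
    else if a = i ∧ b = j then -Real.sin θ
    else if a = j ∧ b = i then Real.sin θ
    else if a = b then 1 else 0

/-!
The values `f (Q k)` increase, and a step at `Q k` improves `f` at least as much as any angle of the
selected rotation. Only finitely many pairs of indices occur, so an accumulation point `Qs` is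
already one along the steps using some fixed pair `(i, j)`; passing to the limit along these steps,
`θ ↦ f (Qs G(i,j,θ))` is maximal at `θ = 0` and its derivative there vanishes. As `f` is `C¹`, both
sides of the inequality defining the choice of the pair are continuous in `Q`, so the inequality
survives in the limit and bounds the projected gradient at `Qs` by that vanishing derivative.
-/

open scoped Topology

section ClusterPoints

variable {X : Type*} [TopologicalSpace X] {x : X}

theorem exists_mapClusterPt_inf_principal_fiber {α ι : Type*} [Finite ι] {F : Filter α} {u : α → X}
    (hx : MapClusterPt x F u) (c : α → ι) : ∃ b, MapClusterPt x (F ⊓ 𝓟 {k | c k = b}) u := by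
  obtain ⟨l, hlF, hlx⟩ := mapClusterPt_iff_ultrafilter.1 hx
  obtain ⟨b, hb⟩ : ∃ b, ∀ᶠ k in l, c k = b :=
    Ultrafilter.eventually_exists_iff.1 (Eventually.of_forall fun k => ⟨c k, rfl⟩)
  exact ⟨b, hlx.mapClusterPt.mono (le_inf hlF (le_principal_iff.2 hb))⟩

theorem le_of_mapClusterPt_of_monotone {κ β : Type*} [Preorder κ] [Preorder β] [TopologicalSpace β]
    [ClosedIciTopology β] {u : κ → X} {f : X → β} (hf : Continuous f) (hmono : Monotone (f ∘ u))
    (hx : MapClusterPt x atTop u) (k : κ) : f (u k) ≤ f x :=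
  (isClosed_Ici.preimage hf).mem_of_mapClusterPt hx
    ((eventually_ge_atTop k).mono fun _ hk => hmono hk)

theorem map_le_of_mapClusterPt_of_le_succ {β : Type*} [Preorder β] [TopologicalSpace β]
    [OrderClosedTopology β] {u : ℕ → X} {f : X → β} {T : X → X} {F : Filter ℕ} (hf : Continuous f)
    (hT : Continuous T) (hmono : Monotone (f ∘ u)) (hstep : ∀ᶠ k in F, f (T (u k)) ≤ f (u (k + 1)))
    (hF : F ≤ atTop) (hx : MapClusterPt x F u) : f (T x) ≤ f x :=
  (isClosed_Iic.preimage (hf.comp hT)).mem_of_mapClusterPt hx <|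
    hstep.mono fun k hk => hk.trans (le_of_mapClusterPt_of_monotone hf hmono (hx.mono hF) (k + 1))

end ClusterPoints

section LineSearch

variable {A : Type*} [NormedRing A] [NormedAlgebra ℝ A] {E : Type*} [NormedAddCommGroup E]
  [NormedSpace ℝ E]

theorem deriv_comp_mul_curve {f : A → E} {γ : ℝ → A} {x : A}
    (hf : DifferentiableAt ℝ f x) (hγ : DifferentiableAt ℝ γ 0) (hγ0 : γ 0 = 1) :
    deriv (fun t => f (x * γ t)) 0 = fderiv ℝ f x (x * deriv γ 0) := by
  have hbase : x * γ 0 = x := by rw [hγ0, mul_one]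
  exact (hf.hasFDerivAt.comp_hasDerivAt_of_eq 0 (hγ.hasDerivAt.const_mul x) hbase.symm).deriv

theorem continuous_deriv_comp_mul_curve {f : A → E} {γ : ℝ → A} (hf : ContDiff ℝ 1 f)
    (hγ : DifferentiableAt ℝ γ 0) (hγ0 : γ 0 = 1) :
    Continuous fun x => deriv (fun t => f (x * γ t)) 0 := by
  simp_rw [fun x => deriv_comp_mul_curve (hf.differentiable one_ne_zero x) hγ hγ0]
  exact (hf.continuous_fderiv one_ne_zero).clm_apply (by fun_prop)

theorem nonpos_of_mapClusterPt_of_lineSearch {ι : Type*} [Finite ι] {f ρ : A → ℝ}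
    {γ : ι → ℝ → A} {u : ℕ → A} {c : ℕ → ι} {x : A} (hf : ContDiff ℝ 1 f)
    (hγ : ∀ b, DifferentiableAt ℝ (γ b) 0) (hγ0 : ∀ b, γ b 0 = 1) (hρ : Continuous ρ)
    (hslope : ∀ k, ρ (u k) ≤ |deriv (fun t => f (u k * γ (c k) t)) 0|)
    (hmax : ∀ k t, f (u k * γ (c k) t) ≤ f (u (k + 1)))
    (hx : MapClusterPt x atTop u) : ρ x ≤ 0 := by
  have hmono : Monotone (f ∘ u) := monotone_nat_of_le_succ fun k => by
    simpa only [Function.comp_apply, hγ0, mul_one] using hmax k 0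
  obtain ⟨b, hxb⟩ := exists_mapClusterPt_inf_principal_fiber hx c
  have hfiber : ∀ᶠ k in atTop ⊓ 𝓟 {k | c k = b}, c k = b :=
    mem_inf_of_right (mem_principal_self _)
  have hle (t : ℝ) : f (x * γ b t) ≤ f x :=
    map_le_of_mapClusterPt_of_le_succ (T := (· * γ b t)) hf.continuous (by fun_prop) hmono
      (hfiber.mono fun k hk => hk ▸ hmax k t) inf_le_left hxb
  have hcrit : deriv (fun t => f (x * γ b t)) 0 = 0 :=
    IsLocalMax.deriv_eq_zero <| Eventually.of_forall fun t => by
      simpa only [hγ0, mul_one] using hle t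
  have hlim : ρ x ≤ |deriv (fun t => f (x * γ b t)) 0| :=
    (isClosed_le hρ (continuous_deriv_comp_mul_curve hf (hγ b) (hγ0 b)).abs).mem_of_mapClusterPt
      hxb (hfiber.mono fun k hk => hk ▸ hslope k)
  rwa [hcrit, abs_zero] at hlim

end LineSearch

section Matrices

open scoped Matrix.Norms.Frobenius

theorem contDiff_of_contDiff_comp_of {m p : Type*} [Fintype m] [Fintype p] {k : WithTop ℕ∞}
    {E : Type*} [NormedAddCommGroup E] [NormedSpace ℝ E] {f : Matrix m p ℝ → E}
    (hf : ContDiff ℝ k fun x : m → p → ℝ => f (Matrix.of x)) : ContDiff ℝ k f :=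
  hf.comp ((Matrix.ofLinearEquiv ℝ).symm : Matrix m p ℝ ≃ₗ[ℝ] _).toContinuousLinearEquiv.contDiff

theorem differentiable_matrix {m p E : Type*} [Finite m] [Finite p] [NormedAddCommGroup E]
    [NormedSpace ℝ E] {M : E → Matrix m p ℝ} (hM : ∀ a b, Differentiable ℝ fun t => M t a b) :
    Differentiable ℝ M := by
  cases nonempty_fintype m
  cases nonempty_fintype p
  let e : (m → p → ℝ) ≃ₗ[ℝ] Matrix m p ℝ := Matrix.ofLinearEquiv ℝ
  exact e.toContinuousLinearEquiv.differentiable.comp <| differentiable_pi.2 fun a =>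
    differentiable_pi.2 fun b => hM a b

variable {n : ℕ} {f : Matrix (Fin n) (Fin n) ℝ → ℝ}
  {g : Matrix (Fin n) (Fin n) ℝ → Matrix (Fin n) (Fin n) ℝ}

theorem frobR_eq_norm (A : Matrix (Fin n) (Fin n) ℝ) : frobR A = ‖A‖ := by
  simp [frobR, frobenius_norm_def, Real.sqrt_eq_rpow]

theorem mapClusterPt_of_tendsto_frobR {Q : ℕ → Matrix (Fin n) (Fin n) ℝ}
    {Qs : Matrix (Fin n) (Fin n) ℝ} {φ : ℕ → ℕ} (hφ : Tendsto φ atTop atTop)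
    (hlim : Tendsto (fun m => frobR (Q (φ m) - Qs)) atTop (𝓝 0)) : MapClusterPt Qs atTop Q := by
  simp_rw [frobR_eq_norm] at hlim
  exact (tendsto_iff_norm_sub_tendsto_zero.2 hlim).mapClusterPt.of_comp hφ

theorem IsGradR.fderiv_apply (hg : IsGradR f g) {Q : Matrix (Fin n) (Fin n) ℝ}
    (hf : DifferentiableAt ℝ f Q) (H : Matrix (Fin n) (Fin n) ℝ) :
    fderiv ℝ f Q H = ∑ a, ∑ b, g Q a b * H a b :=
  (hf.hasFDerivAt.hasLineDerivAt H).unique (hg Q H)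

theorem IsGradR.fderiv_single (hg : IsGradR f g) {Q : Matrix (Fin n) (Fin n) ℝ}
    (hf : DifferentiableAt ℝ f Q) (a b : Fin n) :
    fderiv ℝ f Q (Matrix.single a b 1) = g Q a b := by
  simp [hg.fderiv_apply hf, Matrix.single_apply, ite_and]

theorem IsGradR.continuous (hg : IsGradR f g) (hf : ContDiff ℝ 1 f) : Continuous g := by
  refine continuous_matrix fun a b => ?_
  simp_rw [← fun Q => hg.fderiv_single (hf.differentiable one_ne_zero Q) a b]
  exact (hf.continuous_fderiv one_ne_zero).clm_apply continuous_const

theorem continuous_projGradR (hg : Continuous g) : Continuous (projGradR g) := by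
  unfold projGradR
  fun_prop

theorem givensR_zero (i j : Fin n) : givensR n i j 0 = 1 := by
  ext a b
  simp only [givensR, Real.cos_zero, Real.sin_zero, neg_zero, Matrix.one_apply]
  grind

theorem differentiable_givensR (i j : Fin n) : Differentiable ℝ (givensR n i j) := by
  refine differentiable_matrix fun a b => ?_
  unfold givensR
  split_ifs <;> fun_prop

theorem jacobiG_accumulation_stationary_general (hf : ContDiff ℝ 1 f) (hg : IsGradR f g) {δ : ℝ}
    (hδ : 0 < δ) {Q : ℕ → Matrix (Fin n) (Fin n) ℝ} {i j : ℕ → Fin n}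
    (hpair : ∀ k, δ * frobR (projGradR g (Q k)) ≤
      |deriv (fun t : ℝ => f (Q k * givensR n (i k) (j k) t)) 0|)
    (hmax : ∀ k t, f (Q k * givensR n (i k) (j k) t) ≤ f (Q (k + 1)))
    {Qs : Matrix (Fin n) (Fin n) ℝ} (hacc : MapClusterPt Qs atTop Q) : projGradR g Qs = 0 := by
  simp_rw [frobR_eq_norm] at hpair
  have hρ : Continuous fun R => δ * ‖projGradR g R‖ :=
    continuous_const.mul (continuous_projGradR (hg.continuous hf)).norm
  have hle : δ * ‖projGradR g Qs‖ ≤ 0 :=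
    nonpos_of_mapClusterPt_of_lineSearch (γ := fun p : Fin n × Fin n => givensR n p.1 p.2)
      (c := fun k => (i k, j k)) hf (fun p => (differentiable_givensR p.1 p.2) 0)
      (fun p => givensR_zero p.1 p.2) hρ hpair hmax hacc
  exact norm_le_zero_iff.1 (nonpos_of_mul_nonpos_right hle hδ)

end Matrices

/-- Weak convergence of the Jacobi-G algorithm on O(n) for a smooth cost function:
every accumulation point of the iterates is a stationary point. -/
theorem jacobiG_accumulation_stationary {n : ℕ}
    (f : Matrix (Fin n) (Fin n) ℝ → ℝ)
    (g : Matrix (Fin n) (Fin n) ℝ → Matrix (Fin n) (Fin n) ℝ)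
    (hsmooth : ContDiff ℝ (⊤ : ℕ∞) (fun x : Fin n → Fin n → ℝ => f (Matrix.of x)))
    (hg : IsGradR f g)
    (δ : ℝ) (hδ0 : 0 < δ) (hδn : δ < 2 / (n : ℝ))
    (Q : ℕ → Matrix (Fin n) (Fin n) ℝ) (hQ0 : (Q 0)ᵀ * Q 0 = 1)
    (i j : ℕ → Fin n) (θ : ℕ → ℝ)
    (hij : ∀ k, i k < j k)
    (hupd : ∀ k, Q (k + 1) = Q k * givensR n (i k) (j k) (θ k))
    (hpair : ∀ k, δ * frobR (projGradR g (Q k)) ≤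
      |deriv (fun t : ℝ => f (Q k * givensR n (i k) (j k) t)) 0|)
    (hmax : ∀ k t, f (Q k * givensR n (i k) (j k) t) ≤ f (Q (k + 1)))
    (hminabs : ∀ k t, (∀ s, f (Q k * givensR n (i k) (j k) s) ≤
        f (Q k * givensR n (i k) (j k) t)) → |θ k| ≤ |t|)
    (Qs : Matrix (Fin n) (Fin n) ℝ)
    (hacc : ∃ φ : ℕ → ℕ, StrictMono φ ∧
      Tendsto (fun m => frobR (Q (φ m) - Qs)) atTop (nhds 0)) :
    projGradR g Qs = 0 := by
  obtain ⟨φ, hφ, hlim⟩ := hacc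
  exact jacobiG_accumulation_stationary_general
    (contDiff_of_contDiff_comp_of (hsmooth.of_le (by simp))) hg hδ0 hpair hmax
    (mapClusterPt_of_tendsto_frobR hφ.tendsto_atTop hlim)
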